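/- Let α ∈ (0,1) be the solution of ∫_0^1 dy/(y − y·ln y + 1/α − 1) = 1 (so α ≈ 0.745). For every ε > 0 there exist an integer n and a product distribution of (x,y) on [0,∞)×[0,1] — with x distributed according to some distribution F and y uniform on [0,1], independent of x — such that for every measurable eligible set R ⊆ [0,∞)×[0,1], when the agent draws n i.i.d. samples (x_1,y_1),…,(x_n,y_n) and proposes the eligible sample with maximum y-value (proposing nothing if no sample is eligible), the principal's expected utility is less than (α + ε)·E[max_{1≤i≤n} x_i]. -/

import Mathlib

open MeasureTheory ProbabilityTheory

/-!
Put `b = 1 / α - 1` and `D s = b + s - s log s` (`denominator`). With many samples the eligible ones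
arrive approximately as a Poisson process, and the proposal is its last arrival in the order of
agent utilities. If `ν` is the intensity of principal utilities and the eligible samples arrive at
rate `q y`, the principal earns `∫∫_R x exp (-∫_y^1 q)`, and integration by parts bounds this by
`W 1` for every `W` with `0 ≤ W 0` and `∫ (x - W y)⁺ dν ≤ W' y`.

The hard instance has tail `ν [v u, ∞) = -log u` for `v u = ∫_0^u D⁻²` (`quantile`), together with a
value `K` (`peak`) of small mass `κ` and `κ (K - v 1) = 1 / (b + 1)`. Then
`∫ (x - v u)⁺ dν ≈ 1 / D u`, so that `W = v ∘ T⁻¹` (`value`) with `T u = ∫_0^u D⁻¹` (`clock`) solves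
the differential equation up to a small error, and the equation defining `α` says `T 1 = 1`, that is
`W 1 = v 1`. On the other hand the expected maximum is approximately
`∫_0^1 (1 - u) v' u du + 1 / (b + 1) = (1 + b) v 1 = v 1 / α`, because
`∫_0^1 (b + u) D⁻² = [u / D]_0^1 = 1 / (b + 1)`.
-/

namespace Delegation

open Set Filter Topology
open scoped NNReal ENNReal

lemma absolutelyContinuousOnInterval_comp_of_lipschitzOnWith {X Y : Type*} [PseudoMetricSpace X]
    [PseudoMetricSpace Y] {f : ℝ → X} {g : X → Y} {K : ℝ≥0} {s : Set X} {a b : ℝ}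
    (hg : LipschitzOnWith K g s) (hf : AbsolutelyContinuousOnInterval f a b)
    (hfs : MapsTo f (uIcc a b) s) : AbsolutelyContinuousOnInterval (g ∘ f) a b := by
  have hbound := Tendsto.const_mul (K : ℝ) (show Tendsto _ _ _ from hf)
  rw [mul_zero] at hbound
  refine squeeze_zero' (.of_forall fun _ => Finset.sum_nonneg fun _ _ => dist_nonneg) ?_ hbound
  filter_upwards [mem_inf_of_right (mem_principal_self _)] with E hE
  rw [Finset.mul_sum]
  exact Finset.sum_le_sum fun i hi =>
    hg.dist_le_mul _ (hfs (hE.1 i hi).1) _ (hfs (hE.1 i hi).2)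

lemma absolutelyContinuousOnInterval_exp_neg_integral {q : ℝ → ℝ} {a b : ℝ}
    (hq : IntervalIntegrable q volume a b) :
    AbsolutelyContinuousOnInterval (fun y => Real.exp (-∫ s in y..b, q s)) a b := by
  have hprim := hq.absolutelyContinuousOnInterval_intervalIntegral right_mem_uIcc
  obtain ⟨C, hC⟩ := hprim.exists_bound
  obtain ⟨K, hK⟩ := Real.contDiff_exp.contDiffOn.exists_lipschitzOnWith (n := 1) (by simp)
    (convex_Icc (-C) C) isCompact_Icc
  have hcomp := absolutelyContinuousOnInterval_comp_of_lipschitzOnWith hK hprim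
    fun y hy => abs_le.1 (hC y hy)
  simpa only [Function.comp_def, intervalIntegral.integral_symm b, neg_neg] using hcomp

lemma integral_exp_neg_integral_mul_deriv_add {q W : ℝ → ℝ} {a b : ℝ}
    (hq : IntervalIntegrable q volume a b) (hW : AbsolutelyContinuousOnInterval W a b) :
    ∫ y in a..b, Real.exp (-∫ s in y..b, q s) * (deriv W y + q y * W y)
      = W b - Real.exp (-∫ s in a..b, q s) * W a := by
  have hparts :=
    (absolutelyContinuousOnInterval_exp_neg_integral hq).integral_deriv_mul_eq_sub hW
  rw [intervalIntegral.integral_same, neg_zero, Real.exp_zero, one_mul] at hparts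
  rw [← hparts]
  refine intervalIntegral.integral_congr_ae ?_
  filter_upwards [hq.ae_hasDerivAt_integral] with y hy hyab
  have hprim : HasDerivAt (fun y => -∫ s in y..b, q s) (q y) y := by
    simpa only [← intervalIntegral.integral_symm] using
      hy (uIoc_subset_uIcc hyab) b right_mem_uIcc
  rw [hprim.exp.deriv]
  ring

lemma surjective_of_le_deriv {f f' : ℝ → ℝ} {c : ℝ} (hc : 0 < c)
    (hf : ∀ x, HasDerivAt f (f' x) x) (hf' : ∀ x, c ≤ f' x) : Function.Surjective f := by
  have hdiff : Differentiable ℝ f := fun x => (hf x).differentiableAt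
  have hgrowth : ∀ ⦃x y⦄, x ≤ y → c * (y - x) ≤ f y - f x :=
    mul_sub_le_image_sub_of_le_deriv hdiff fun x => (hf x).deriv.symm ▸ hf' x
  refine hdiff.continuous.surjective ?_ ?_
  · refine tendsto_atTop_mono' _ ?_
      (tendsto_atTop_add_const_right _ (f 0) (tendsto_id.const_mul_atTop hc))
    filter_upwards [eventually_ge_atTop 0] with x hx
    simp only [id]
    linarith [hgrowth hx]
  · refine tendsto_atBot_mono' _ ?_
      (tendsto_atBot_add_const_right _ (f 0) (tendsto_id.const_mul_atBot hc))
    filter_upwards [eventually_le_atBot 0] with x hx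
    simp only [id]
    linarith [hgrowth hx]

lemma hasDerivAt_orderIso_symm (e : ℝ ≃o ℝ) {e' y : ℝ} (he : HasDerivAt e e' (e.symm y))
    (he' : e' ≠ 0) : HasDerivAt e.symm e'⁻¹ y :=
  he.of_local_left_inverse e.symm.continuous.continuousAt he' (.of_forall e.apply_symm_apply)

lemma ae_pi_forall {ι Ω : Type*} [Fintype ι] [MeasurableSpace Ω] {μ : Measure Ω}
    [IsProbabilityMeasure μ] {p : Ω → Prop} (h : ∀ᵐ ω ∂μ, p ω) :
    ∀ᵐ v ∂(Measure.pi fun _ : ι => μ), ∀ i, p (v i) :=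
  ae_all_iff.2 fun i =>
    (measurePreserving_eval (fun _ : ι => μ) i).quasiMeasurePreserving.ae h

section Sampling

variable {Ω : Type*} [MeasurableSpace Ω] {μ : Measure Ω} [IsProbabilityMeasure μ] {m : ℕ}
  {f : Ω → ℝ} {h : Ω → Ω → ℝ}

lemma integrable_fst_mul_prod (hf : Integrable f μ) (hh : Measurable (Function.uncurry h))
    (hh1 : ∀ p s, ‖h p s‖ ≤ 1) :
    Integrable (fun z : Ω × (Fin m → Ω) => f z.1 * ∏ j, h z.1 (z.2 j))
      (μ.prod (Measure.pi fun _ => μ)) := by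
  refine (hf.comp_fst _).mul_bdd (c := 1) ?_ (.of_forall fun z => ?_)
  · exact (Finset.measurable_fun_prod _ fun j _ => hh.comp <|
      measurable_fst.prodMk ((measurable_pi_apply j).comp measurable_snd)).aestronglyMeasurable
  · rw [norm_prod]
    exact Finset.prod_le_one (fun _ _ => norm_nonneg _) fun _ _ => hh1 _ _

lemma integrable_eval_mul_prod_succAbove (hf : Integrable f μ)
    (hh : Measurable (Function.uncurry h)) (hh1 : ∀ p s, ‖h p s‖ ≤ 1) (i : Fin (m + 1)) :
    Integrable (fun v => f (v i) * ∏ j, h (v i) (v (i.succAbove j)))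
      (Measure.pi fun _ : Fin (m + 1) => μ) :=
  (measurePreserving_piFinSuccAbove (fun _ => μ) i).integrable_comp_of_integrable
    (integrable_fst_mul_prod hf hh hh1)

lemma integral_eval_mul_prod_succAbove (hf : Integrable f μ)
    (hh : Measurable (Function.uncurry h)) (hh1 : ∀ p s, ‖h p s‖ ≤ 1) (i : Fin (m + 1)) :
    ∫ v, f (v i) * ∏ j, h (v i) (v (i.succAbove j)) ∂(Measure.pi fun _ : Fin (m + 1) => μ)
      = ∫ p, f p * (∫ s, h p s ∂μ) ^ m ∂μ := by
  calc _ = ∫ z, f z.1 * ∏ j, h z.1 (z.2 j) ∂(μ.prod (Measure.pi fun _ : Fin m => μ)) :=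
        (measurePreserving_piFinSuccAbove (fun _ => μ) i).integral_comp'
          fun z => f z.1 * ∏ j, h z.1 (z.2 j)
    _ = ∫ p, f p * ∏ _j : Fin m, ∫ s, h p s ∂μ ∂μ := by
        rw [integral_prod _ (integrable_fst_mul_prod hf hh hh1)]
        simp only [integral_const_mul, integral_fintype_prod_eq_prod]
    _ = _ := by simp only [Finset.prod_const, Finset.card_univ, Fintype.card_fin]

lemma integral_iSup_eq_integral_Ioc {ι : Type*} [Fintype ι] [Nonempty ι] {X : Ω → ℝ}
    (hX : Measurable X) {K : ℝ} (hXK : ∀ᵐ ω ∂μ, X ω ∈ Icc 0 K) :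
    ∫ v, ⨆ i, X (v i) ∂(Measure.pi fun _ : ι => μ)
      = ∫ x in Ioc 0 K, (1 - μ.real (X ⁻¹' Iio x) ^ Fintype.card ι) := by
  have hmeas : Measurable fun v : ι → Ω => ⨆ i, X (v i) :=
    .iSup fun i => hX.comp (measurable_pi_apply i)
  have hmem : ∀ᵐ v ∂(Measure.pi fun _ : ι => μ), ⨆ i, X (v i) ∈ Icc 0 K := by
    filter_upwards [ae_pi_forall hXK] with v hv
    obtain ⟨i, hi⟩ := exists_eq_ciSup_of_finite (f := fun i => X (v i))
    exact hi ▸ hv i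
  rw [(Integrable.of_mem_Icc 0 K hmeas.aemeasurable hmem).integral_eq_integral_Ioc_meas_le
    (hmem.mono fun _ => And.left) (hmem.mono fun _ => And.right)]
  congr 1 with x
  have hset : {v : ι → Ω | x ≤ ⨆ i, X (v i)} = (univ.pi fun _ => X ⁻¹' Iio x)ᶜ := by
    ext v
    simp only [mem_ofPred_eq, mem_compl_iff, mem_univ_pi, mem_preimage, mem_Iio, not_forall, not_lt]
    refine ⟨fun hx => ?_, fun ⟨i, hi⟩ =>
      hi.trans (le_ciSup (f := fun i => X (v i)) (finite_range _).bddAbove i)⟩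
    obtain ⟨i, hi⟩ := exists_eq_ciSup_of_finite (f := fun i => X (v i))
    exact ⟨i, hx.trans_eq hi.symm⟩
  rw [hset, probReal_compl_eq_one_sub (.univ_pi fun _ => hX measurableSet_Iio), measureReal_def,
    Measure.pi_pi, Finset.prod_const, Finset.card_univ, ENNReal.toReal_pow, ← measureReal_def]

end Sampling

section Mechanism

variable {n m : ℕ} {R : Set (ℝ × ℝ)}

/-- The principal's utility when the agent's proposal rule is `sel`: the first coordinate of the
proposed sample, and `0` if nothing is proposed. -/
def proposalUtility (sel : (Fin n → ℝ × ℝ) → Option (Fin n)) (v : Fin n → ℝ × ℝ) : ℝ :=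
  ((sel v).map fun i => (v i).1).getD 0

/-- The proposal rule `sel` only proposes samples that are eligible for `R` and, among those,
have maximal agent utility. It may abstain even when eligible samples exist. -/
def ProposesMaximalEligible (R : Set (ℝ × ℝ)) (sel : (Fin n → ℝ × ℝ) → Option (Fin n)) : Prop :=
  ∀ v i, sel v = some i → v i ∈ R ∧ ∀ j, v j ∈ R → (v j).2 ≤ (v i).2

/-- The indicator that the sample `s` does not outbid the proposal `p`, i.e. is not an eligible
sample with larger agent utility. -/
noncomputable def notOutbid (R : Set (ℝ × ℝ)) (p s : ℝ × ℝ) : ℝ :=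
  (R ∩ Prod.snd ⁻¹' Ioi p.2)ᶜ.indicator 1 s

lemma notOutbid_nonneg (p s : ℝ × ℝ) : 0 ≤ notOutbid R p s :=
  indicator_nonneg (fun _ _ => zero_le_one) s

lemma measurable_notOutbid (hR : MeasurableSet R) :
    Measurable (Function.uncurry (notOutbid R)) := by
  have hset : MeasurableSet {z : (ℝ × ℝ) × ℝ × ℝ | z.2 ∈ R ∧ z.1.2 < z.2.2} :=
    (measurable_snd hR).inter
      (measurableSet_lt (measurable_snd.comp measurable_fst) (measurable_snd.comp measurable_snd))
  exact measurable_one.indicator hset.compl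

lemma norm_notOutbid_le (p s : ℝ × ℝ) : ‖notOutbid R p s‖ ≤ 1 :=
  (norm_indicator_le_norm_self _ s).trans_eq norm_one

lemma integral_notOutbid {μ : Measure (ℝ × ℝ)} [IsProbabilityMeasure μ] (hR : MeasurableSet R)
    (p : ℝ × ℝ) : ∫ s, notOutbid R p s ∂μ = 1 - μ.real (R ∩ Prod.snd ⁻¹' Ioi p.2) := by
  have hset := hR.inter (measurable_snd (measurableSet_Ioi (a := p.2)))
  rw [← probReal_compl_eq_one_sub hset, ← integral_indicator_one hset.compl]
  rfl

lemma proposalUtility_le_sum {sel : (Fin (m + 1) → ℝ × ℝ) → Option (Fin (m + 1))}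
    (hsel : ProposesMaximalEligible R sel) {v : Fin (m + 1) → ℝ × ℝ} (hv : ∀ i, 0 ≤ (v i).1) :
    proposalUtility sel v
      ≤ ∑ i, R.indicator Prod.fst (v i) * ∏ j, notOutbid R (v i) (v (i.succAbove j)) := by
  have hterm (i) :
      0 ≤ R.indicator Prod.fst (v i) * ∏ j, notOutbid R (v i) (v (i.succAbove j)) :=
    mul_nonneg (indicator_apply_nonneg fun _ => hv i)
      (Finset.prod_nonneg fun _ _ => notOutbid_nonneg _ _)
  cases hs : sel v with
  | none =>
    rw [proposalUtility, hs]
    exact Finset.sum_nonneg fun i _ => hterm i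
  | some i =>
    obtain ⟨hi, hmax⟩ := hsel v i hs
    have hprod : ∏ j, notOutbid R (v i) (v (i.succAbove j)) = 1 :=
      Finset.prod_eq_one fun j _ => indicator_of_mem
        (show v (i.succAbove j) ∉ R ∩ _ from fun hj => (hmax _ hj.1).not_gt hj.2) _
    calc proposalUtility sel v
        = R.indicator Prod.fst (v i) * ∏ j, notOutbid R (v i) (v (i.succAbove j)) := by
          rw [hprod, mul_one, indicator_of_mem hi, proposalUtility, hs]
          rfl
      _ ≤ _ := Finset.single_le_sum (fun i _ => hterm i) (Finset.mem_univ i)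

theorem integral_proposalUtility_le {μ : Measure (ℝ × ℝ)} [IsProbabilityMeasure μ]
    (hμ : Integrable Prod.fst μ) (hμ0 : ∀ᵐ p ∂μ, 0 ≤ p.1) (hR : MeasurableSet R)
    {sel : (Fin (m + 1) → ℝ × ℝ) → Option (Fin (m + 1))} (hsel : ProposesMaximalEligible R sel) :
    ∫ v, proposalUtility sel v ∂(Measure.pi fun _ => μ)
      ≤ (m + 1) * ∫ p in R, p.1 * (1 - μ.real (R ∩ Prod.snd ⁻¹' Ioi p.2)) ^ m ∂μ := by
  have hint (i : Fin (m + 1)) := integrable_eval_mul_prod_succAbove (hμ.indicator hR)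
    (measurable_notOutbid hR) norm_notOutbid_le i
  calc ∫ v, proposalUtility sel v ∂(Measure.pi fun _ => μ)
      ≤ ∫ v, ∑ i, R.indicator Prod.fst (v i) * ∏ j, notOutbid R (v i) (v (i.succAbove j))
          ∂(Measure.pi fun _ : Fin (m + 1) => μ) := by
        refine integral_mono_of_nonneg ?_ (integrable_finsetSum _ fun i _ => hint i) ?_
        · filter_upwards [ae_pi_forall hμ0] with v hv
          rw [Pi.zero_apply, proposalUtility]
          cases sel v with
          | none => exact le_rfl
          | some i => exact hv i
        · filter_upwards [ae_pi_forall hμ0] with v hv using proposalUtility_le_sum hsel hv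
    _ = ∑ _i : Fin (m + 1), ∫ p, R.indicator Prod.fst p * (∫ s, notOutbid R p s ∂μ) ^ m ∂μ := by
        rw [integral_finsetSum _ fun i _ => hint i]
        exact Finset.sum_congr rfl fun i _ => integral_eval_mul_prod_succAbove
          (hμ.indicator hR) (measurable_notOutbid hR) norm_notOutbid_le i
    _ = _ := by
        rw [Finset.sum_const, Finset.card_univ, Fintype.card_fin, nsmul_eq_mul, Nat.cast_add_one,
          ← integral_indicator hR]
        simp only [integral_notOutbid hR, indicator_mul_left R Prod.fst]

end Mechanism

section Verification

variable {ν : Measure ℝ} {R : Set (ℝ × ℝ)}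

/-- The law of a sample whose principal utility has law `F` and whose agent utility is uniform on
`[0, 1]`, independently; also used for unnormalized `F`. -/
noncomputable def sampleLaw (F : Measure ℝ) : Measure (ℝ × ℝ) :=
  F.prod ((volume : Measure ℝ).restrict (Icc (0 : ℝ) 1))

instance : IsProbabilityMeasure ((volume : Measure ℝ).restrict (Icc (0 : ℝ) 1)) :=
  ⟨by simp⟩

instance (F : Measure ℝ) [IsProbabilityMeasure F] : IsProbabilityMeasure (sampleLaw F) :=
  inferInstanceAs (IsProbabilityMeasure (F.prod _))

/-- The rate at which samples that are eligible for `R` arrive at agent utility `y`, when `ν` is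
the intensity of the principal utilities. -/
noncomputable def eligibleRate (ν : Measure ℝ) (R : Set (ℝ × ℝ)) (y : ℝ) : ℝ :=
  ν.real {x | (x, y) ∈ R}

lemma eligibleRate_nonneg (y : ℝ) : 0 ≤ eligibleRate ν R y := measureReal_nonneg

lemma eligibleRate_smul (c : ℝ≥0) (ν : Measure ℝ) (y : ℝ) :
    eligibleRate (c • ν) R y = c * eligibleRate ν R y :=
  measureReal_nnreal_smul_apply c

lemma exp_neg_integral_eligibleRate_le_one {y : ℝ} (hy : y ≤ 1) :
    Real.exp (-∫ s in y..1, eligibleRate ν R s) ≤ 1 :=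
  Real.exp_le_one_iff.2 <| neg_nonpos.2 <|
    intervalIntegral.integral_nonneg hy fun _ _ => eligibleRate_nonneg _

lemma integral_indicator_mul_prodMk_right (hR : MeasurableSet R) (g : ℝ → ℝ) (y : ℝ) :
    ∫ x, R.indicator (fun p : ℝ × ℝ => p.1 * g p.2) (x, y) ∂ν
      = g y * ∫ x in {x | (x, y) ∈ R}, x ∂ν := by
  rw [mul_comm, ← integral_mul_const]
  exact integral_indicator (hR.preimage measurable_prodMk_right)

variable [IsFiniteMeasure ν]

lemma integrable_eligibleRate (hR : MeasurableSet R) {s : Set ℝ} (hs : volume s ≠ ∞) :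
    IntegrableOn (eligibleRate ν R) s :=
  .of_bound hs.lt_top (measurable_measure_prodMk_right hR).ennreal_toReal.aestronglyMeasurable
    (ν.real univ) (.of_forall fun y => by
      rw [Real.norm_of_nonneg (eligibleRate_nonneg y)]
      exact measureReal_mono (subset_univ _))

lemma intervalIntegrable_eligibleRate (hR : MeasurableSet R) (a b : ℝ) :
    IntervalIntegrable (eligibleRate ν R) volume a b :=
  intervalIntegrable_iff.2 (integrable_eligibleRate hR (measure_Ioc_lt_top.ne))

lemma sampleLaw_real_inter_preimage_Ioi (hR : MeasurableSet R) {y : ℝ} (hy : y ∈ Icc (0 : ℝ) 1) :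
    (sampleLaw ν).real (R ∩ Prod.snd ⁻¹' Ioi y) = ∫ s in y..1, eligibleRate ν R s := by
  have hrestrict : (sampleLaw ν).restrict (Prod.snd ⁻¹' Ioi y)
      = ν.prod ((volume : Measure ℝ).restrict (Ioc y 1)) := by
    have hIoc : Ioi y ∩ Icc 0 1 = Ioc y 1 := by
      ext s
      exact ⟨fun hs => ⟨hs.1, hs.2.2⟩, fun hs => ⟨hs.1, hy.1.trans hs.1.le, hs.2⟩⟩
    rw [← univ_prod, sampleLaw, ← Measure.prod_restrict, Measure.restrict_univ,
      Measure.restrict_restrict measurableSet_Ioi, hIoc]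
  rw [measureReal_def, ← Measure.restrict_apply hR, hrestrict, Measure.prod_apply_symm hR,
    intervalIntegral.integral_of_le hy.2]
  exact (integral_toReal (measurable_measure_prodMk_right hR).aemeasurable
    (.of_forall fun _ => measure_lt_top ν _)).symm

lemma setIntegral_id_le_integral_posPart_add (hν : Integrable id ν) (S : Set ℝ) (w : ℝ) :
    ∫ x in S, x ∂ν ≤ (∫ x, max (x - w) 0 ∂ν) + ν.real S * w := by
  have hpos : Integrable (fun x => max (x - w) 0) ν := (hν.sub (integrable_const w)).pos_part
  calc ∫ x in S, x ∂ν
      ≤ ∫ x in S, (max (x - w) 0 + w) ∂ν :=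
        setIntegral_mono hν.integrableOn (hpos.add (integrable_const w)).integrableOn
          fun x => sub_le_iff_le_add.1 (le_max_left _ _)
    _ = (∫ x in S, max (x - w) 0 ∂ν) + ν.real S * w := by
        rw [integral_add hpos.integrableOn (integrable_const w), setIntegral_const, smul_eq_mul]
    _ ≤ _ := add_le_add_left
        (setIntegral_le_integral hpos (ae_of_all ν fun x => le_max_right (x - w) 0)) _

lemma continuous_exp_neg_integral_eligibleRate (hR : MeasurableSet R) :
    Continuous fun y => Real.exp (-∫ s in y..1, eligibleRate ν R s) := by
  simp only [intervalIntegral.integral_symm 1, neg_neg]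
  exact Real.continuous_exp.comp
    (intervalIntegral.continuous_primitive (intervalIntegrable_eligibleRate hR) 1)

lemma integrable_fst_mul_exp_neg_integral {μ : Measure ℝ} (hμ : Integrable id μ)
    (hR : MeasurableSet R) :
    Integrable (fun p : ℝ × ℝ => p.1 * Real.exp (-∫ s in p.2..1, eligibleRate ν R s))
      (sampleLaw μ) := by
  refine (hμ.comp_fst _).mul_bdd (c := 1)
    ((continuous_exp_neg_integral_eligibleRate (ν := ν) hR).comp
      continuous_snd).aestronglyMeasurable ?_
  filter_upwards [Measure.quasiMeasurePreserving_snd.ae (ae_restrict_mem measurableSet_Icc)]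
    with p hp
  rw [Real.norm_of_nonneg (Real.exp_pos _).le]
  exact exp_neg_integral_eligibleRate_le_one hp.2

lemma setIntegral_sampleLaw (hR : MeasurableSet R) {g : ℝ → ℝ}
    (hg : Integrable (fun p : ℝ × ℝ => p.1 * g p.2) (sampleLaw ν)) :
    ∫ p in R, p.1 * g p.2 ∂(sampleLaw ν)
      = ∫ y in (0 : ℝ)..1, g y * ∫ x in {x | (x, y) ∈ R}, x ∂ν := by
  rw [← integral_indicator hR, sampleLaw, integral_prod_symm _ (hg.indicator hR),
    integral_Icc_eq_integral_Ioc, ← intervalIntegral.integral_of_le zero_le_one]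
  simp only [integral_indicator_mul_prodMk_right hR]

lemma intervalIntegrable_mul_setIntegral_slice (hR : MeasurableSet R) {g : ℝ → ℝ}
    (hg : Integrable (fun p : ℝ × ℝ => p.1 * g p.2) (sampleLaw ν)) :
    IntervalIntegrable (fun y => g y * ∫ x in {x | (x, y) ∈ R}, x ∂ν) volume 0 1 := by
  rw [intervalIntegrable_iff_integrableOn_Icc_of_le zero_le_one]
  simpa only [IntegrableOn, integral_indicator_mul_prodMk_right hR] using
    (hg.indicator hR).integral_prod_right

theorem setIntegral_fst_mul_exp_neg_integral_le_of_bellman (hν : Integrable id ν)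
    (hR : MeasurableSet R) {W : ℝ → ℝ} (hW : ContDiff ℝ 1 W) (hW0 : 0 ≤ W 0)
    (hbellman : ∀ y ∈ Ioc (0 : ℝ) 1, ∫ x, max (x - W y) 0 ∂ν ≤ deriv W y) :
    ∫ p in R, p.1 * Real.exp (-∫ s in p.2..1, eligibleRate ν R s) ∂(sampleLaw ν) ≤ W 1 := by
  set q := eligibleRate ν R
  set E : ℝ → ℝ := fun y => Real.exp (-∫ s in y..1, q s)
  have hq := intervalIntegrable_eligibleRate (ν := ν) hR 0 1
  have hE : Continuous E := continuous_exp_neg_integral_eligibleRate hR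
  have hint := integrable_fst_mul_exp_neg_integral (ν := ν) hν hR
  calc ∫ p in R, p.1 * E p.2 ∂(sampleLaw ν)
      = ∫ y in (0 : ℝ)..1, E y * ∫ x in {x | (x, y) ∈ R}, x ∂ν := setIntegral_sampleLaw hR hint
    _ ≤ ∫ y in (0 : ℝ)..1, E y * (deriv W y + q y * W y) := by
        refine intervalIntegral.integral_mono_on_of_le_Ioo zero_le_one ?_ ?_ fun y hy => ?_
        · exact intervalIntegrable_mul_setIntegral_slice hR hint
        · exact .continuousOn_mul ((hW.continuous_deriv le_rfl).intervalIntegrable _ _ |>.add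
            (hq.mul_continuousOn hW.continuous.continuousOn)) hE.continuousOn
        · have hslice := setIntegral_id_le_integral_posPart_add hν {x | (x, y) ∈ R} (W y)
          exact mul_le_mul_of_nonneg_left
            (hslice.trans (add_le_add_left (hbellman y ⟨hy.1, hy.2.le⟩) _)) (Real.exp_pos _).le
    _ = W 1 - E 0 * W 0 :=
        integral_exp_neg_integral_mul_deriv_add hq hW.contDiffOn.absolutelyContinuousOnInterval
    _ ≤ W 1 := sub_le_self _ (mul_nonneg (Real.exp_pos _).le hW0)

end Verification

section PoissonComparison

variable {F : Measure ℝ} [IsProbabilityMeasure F] {m : ℕ} {R : Set (ℝ × ℝ)}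

lemma one_sub_pow_le_exp_neg_mul {x : ℝ} (hx : x ≤ 1) (n : ℕ) :
    (1 - x) ^ n ≤ Real.exp (-(n * x)) := by
  rw [← mul_neg, Real.exp_nat_mul]
  exact pow_le_pow_left₀ (sub_nonneg.2 hx) (Real.one_sub_le_exp_neg x) n

lemma integral_proposalUtility_sampleLaw_le (hF : Integrable id F) (hF0 : ∀ᵐ x ∂F, 0 ≤ x)
    (hR : MeasurableSet R) {sel : (Fin (m + 1) → ℝ × ℝ) → Option (Fin (m + 1))}
    (hsel : ProposesMaximalEligible R sel) :
    ∫ v, proposalUtility sel v ∂(Measure.pi fun _ => sampleLaw F)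
      ≤ (m + 1) * ∫ p in R, p.1 * Real.exp (-∫ s in p.2..1, eligibleRate ((m : ℝ≥0) • F) R s)
          ∂(sampleLaw F) := by
  have hfst : ∀ᵐ p ∂(sampleLaw F), 0 ≤ p.1 := Measure.quasiMeasurePreserving_fst.ae hF0
  have hsnd : ∀ᵐ p ∂(sampleLaw F), p.2 ∈ Icc (0 : ℝ) 1 :=
    Measure.quasiMeasurePreserving_snd.ae (ae_restrict_mem measurableSet_Icc)
  refine (integral_proposalUtility_le (hF.comp_fst _) hfst hR hsel).trans ?_
  refine mul_le_mul_of_nonneg_left (integral_mono_of_nonneg ?_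
    (integrable_fst_mul_exp_neg_integral hF hR).integrableOn ?_) (by positivity)
  · filter_upwards [ae_restrict_of_ae hfst] with p hp
    exact mul_nonneg hp (pow_nonneg (sub_nonneg.2 measureReal_le_one) m)
  · filter_upwards [ae_restrict_of_ae hfst, ae_restrict_of_ae hsnd] with p hp1 hp2
    simp only [eligibleRate_smul, intervalIntegral.integral_const_mul,
      ← sampleLaw_real_inter_preimage_Ioi hR hp2]
    exact mul_le_mul_of_nonneg_left (one_sub_pow_le_exp_neg_mul measureReal_le_one m) hp1

theorem integral_proposalUtility_le_of_bellman (hm : 0 < m) (hF : Integrable id F)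
    (hF0 : ∀ᵐ x ∂F, 0 ≤ x) {W : ℝ → ℝ} (hW : ContDiff ℝ 1 W) (hW0 : 0 ≤ W 0)
    (hbellman : ∀ y ∈ Ioc (0 : ℝ) 1, m * ∫ x, max (x - W y) 0 ∂F ≤ deriv W y)
    (hR : MeasurableSet R) {sel : (Fin (m + 1) → ℝ × ℝ) → Option (Fin (m + 1))}
    (hsel : ProposesMaximalEligible R sel) :
    ∫ v, proposalUtility sel v ∂(Measure.pi fun _ => sampleLaw F) ≤ (1 + 1 / m) * W 1 := by
  have : (0 : ℝ) < m := Nat.cast_pos.2 hm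
  have hverify := setIntegral_fst_mul_exp_neg_integral_le_of_bellman (ν := (m : ℝ≥0) • F)
    hF.smul_measure_nnreal hR hW hW0 fun y hy => by
      simpa only [integral_smul_nnreal_measure, NNReal.smul_def, NNReal.coe_natCast,
        smul_eq_mul] using hbellman y hy
  have hlaw : sampleLaw ((m : ℝ≥0) • F) = (m : ℝ≥0) • sampleLaw F := Measure.prod_smul_left _
  rw [hlaw, Measure.restrict_smul, integral_smul_nnreal_measure, NNReal.smul_def, smul_eq_mul,
    NNReal.coe_natCast] at hverify
  set I := ∫ p in R, p.1 * Real.exp (-∫ s in p.2..1, eligibleRate ((m : ℝ≥0) • F) R s)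
    ∂(sampleLaw F)
  calc _ ≤ (m + 1) * I := integral_proposalUtility_sampleLaw_le hF hF0 hR hsel
    _ = (1 + 1 / m) * (m * I) := by field_simp
    _ ≤ (1 + 1 / m) * W 1 := mul_le_mul_of_nonneg_left hverify (by positivity)

theorem integral_Ioc_one_sub_exp_neg_le_integral_iSup {K : ℝ} (hF : ∀ᵐ x ∂F, x ∈ Icc 0 K) :
    ∫ x in Ioc 0 K, (1 - Real.exp (-(m * F.real (Ici x))))
      ≤ ∫ v, ⨆ i, (v i).1 ∂(Measure.pi fun _ : Fin (m + 1) => sampleLaw F) := by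
  have hmem : ∀ᵐ p ∂(sampleLaw F), p.1 ∈ Icc 0 K := Measure.quasiMeasurePreserving_fst.ae hF
  have hcdf (x : ℝ) : (sampleLaw F).real (Prod.fst ⁻¹' Iio x) = 1 - F.real (Ici x) := by
    rw [← compl_Ici, ← probReal_compl_eq_one_sub measurableSet_Ici]
    exact measurePreserving_fst.measureReal_preimage measurableSet_Ici.compl.nullMeasurableSet
  rw [integral_iSup_eq_integral_Ioc measurable_fst hmem, Fintype.card_fin]
  simp only [hcdf]
  have hmeas : Measurable fun x => F.real (Ici x) := Antitone.measurable fun x y hxy =>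
    measureReal_mono (Ici_subset_Ici.2 hxy)
  refine integral_mono (.of_mem_Icc 0 1 ?_ (.of_forall fun x => ?_))
    (.of_mem_Icc 0 1 ?_ (.of_forall fun x => ?_)) fun x => ?_
  · exact (measurable_const.sub (hmeas.const_mul _).neg.exp).aemeasurable
  · exact ⟨sub_nonneg.2 (Real.exp_le_one_iff.2 (neg_nonpos.2 (by positivity))),
      sub_le_self _ (Real.exp_pos _).le⟩
  · exact (measurable_const.sub ((measurable_const.sub hmeas).pow_const _)).aemeasurable
  · have hcdf0 : 0 ≤ 1 - F.real (Ici x) := sub_nonneg.2 measureReal_le_one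
    exact ⟨sub_nonneg.2 (pow_le_one₀ hcdf0 (sub_le_self _ measureReal_nonneg)),
      sub_le_self _ (pow_nonneg hcdf0 _)⟩
  · refine sub_le_sub_left ?_ 1
    calc (1 - F.real (Ici x)) ^ (m + 1) ≤ (1 - F.real (Ici x)) ^ m :=
          pow_le_pow_of_le_one (sub_nonneg.2 measureReal_le_one)
            (sub_le_self _ measureReal_nonneg) m.le_succ
      _ ≤ _ := one_sub_pow_le_exp_neg_mul measureReal_le_one m

end PoissonComparison

section Profile

variable {b : ℝ}

/-- The function `s ↦ b + s - s log s` on `[0, 1]`, extended to `ℝ` by its endpoint values so that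
it is bounded away from zero. -/
noncomputable def denominator (b : ℝ) : ℝ → ℝ :=
  IccExtend zero_le_one fun s : Icc (0 : ℝ) 1 => b + s + Real.negMulLog s

/-- The agent utility at which the optimal strategy against the limiting instance switches to the
threshold indexed by `s`. -/
noncomputable def clock (b s : ℝ) : ℝ := ∫ t in (0 : ℝ)..s, (denominator b t)⁻¹

/-- The principal utility exceeded with intensity `-log s` in the limiting instance, for `s` in
`(0, 1]`. -/
noncomputable def quantile (b s : ℝ) : ℝ := ∫ t in (0 : ℝ)..s, (denominator b t)⁻¹ ^ 2

lemma denominator_of_mem {s : ℝ} (hs : s ∈ Icc (0 : ℝ) 1) :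
    denominator b s = b + s + Real.negMulLog s :=
  IccExtend_of_mem zero_le_one _ hs

lemma denominator_one : denominator b 1 = b + 1 := by
  rw [denominator_of_mem (right_mem_Icc.2 zero_le_one), Real.negMulLog_one, add_zero]

lemma continuous_denominator : Continuous (denominator b) :=
  ((continuous_const.add continuous_subtype_val).add
    (Real.continuous_negMulLog.comp continuous_subtype_val)).Icc_extend'

lemma le_denominator (s : ℝ) : b ≤ denominator b s := by
  obtain ⟨h0, h1⟩ := (projIcc (0 : ℝ) 1 zero_le_one s).2
  have := Real.negMulLog_nonneg h0 h1
  simp only [denominator, IccExtend, Function.comp_apply]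
  linarith

lemma denominator_le (s : ℝ) : denominator b s ≤ b + 1 := by
  have := Real.negMulLog_le_one_sub_self (projIcc (0 : ℝ) 1 zero_le_one s).2.1
  simp only [denominator, IccExtend, Function.comp_apply]
  linarith

lemma denominator_pos (hb : 0 < b) (s : ℝ) : 0 < denominator b s := hb.trans_le (le_denominator s)

lemma hasDerivAt_denominator {s : ℝ} (hs : s ∈ Ioo (0 : ℝ) 1) :
    HasDerivAt (denominator b) (-Real.log s) s := by
  have h : HasDerivAt (fun s => b + s + Real.negMulLog s) (1 + (-Real.log s - 1)) s :=
    ((hasDerivAt_id s).const_add b).add (Real.hasDerivAt_negMulLog hs.1.ne')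
  rw [add_sub_cancel] at h
  exact h.congr_of_eventuallyEq <| eventually_of_mem (Icc_mem_nhds hs.1 hs.2) fun _ =>
    denominator_of_mem

lemma continuous_inv_denominator (hb : 0 < b) : Continuous fun s => (denominator b s)⁻¹ :=
  continuous_denominator.inv₀ fun s => (denominator_pos hb s).ne'

lemma hasDerivAt_quantile (hb : 0 < b) (s : ℝ) :
    HasDerivAt (quantile b) ((denominator b s)⁻¹ ^ 2) s :=
  (((continuous_inv_denominator hb).pow 2).integral_hasStrictDerivAt 0 s).hasDerivAt

lemma quantile_zero : quantile b 0 = 0 := intervalIntegral.integral_same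

lemma strictMono_quantile (hb : 0 < b) : StrictMono (quantile b) :=
  strictMono_of_hasDerivAt_pos (hasDerivAt_quantile hb) fun s =>
    pow_pos (inv_pos.2 (denominator_pos hb s)) 2

lemma continuous_quantile (hb : 0 < b) : Continuous (quantile b) :=
  continuous_iff_continuousAt.2 fun s => (hasDerivAt_quantile hb s).continuousAt

lemma quantile_one_pos (hb : 0 < b) : 0 < quantile b 1 :=
  quantile_zero.symm.trans_lt (strictMono_quantile hb zero_lt_one)

lemma quantile_mem_Icc (hb : 0 < b) {s : ℝ} (hs : s ∈ Icc (0 : ℝ) 1) :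
    quantile b s ∈ Icc 0 (quantile b 1) :=
  ⟨quantile_zero.symm.trans_le ((strictMono_quantile hb).monotone hs.1),
    (strictMono_quantile hb).monotone hs.2⟩

lemma integral_add_mul_deriv_quantile (hb : 0 < b) :
    ∫ u in (0 : ℝ)..1, (b + u) * (denominator b u)⁻¹ ^ 2 = (b + 1)⁻¹ := by
  have hcont := continuous_inv_denominator hb
  have hprim : Continuous fun u => u * (denominator b u)⁻¹ := continuous_id.mul hcont
  have hderiv (u : ℝ) (hu : u ∈ Ioo (0 : ℝ) 1) : HasDerivAt (fun u => u * (denominator b u)⁻¹)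
      ((b + u) * (denominator b u)⁻¹ ^ 2) u := by
    refine ((hasDerivAt_id u).mul
      ((hasDerivAt_denominator hu).fun_inv (denominator_pos hb u).ne')).congr_deriv ?_
    have hD0 := (denominator_pos hb u).ne'
    have hD := denominator_of_mem (b := b) ⟨hu.1.le, hu.2.le⟩
    rw [Real.negMulLog] at hD
    simp only [id]
    field_simp
    linarith
  rw [intervalIntegral.integral_eq_sub_of_hasDerivAt_of_le zero_le_one
    hprim.continuousOn hderiv
    (Continuous.intervalIntegrable (by fun_prop) 0 1), denominator_one]
  ring

lemma integral_quantile_exp_neg_sub (hb : 0 < b) {a : ℝ} (ha : a ∈ Ioc (0 : ℝ) 1) :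
    ∫ t in (0 : ℝ)..(-Real.log a), (quantile b (Real.exp (-t)) - quantile b a)
      = (denominator b a)⁻¹ - (b + 1)⁻¹ := by
  have hexp (t : ℝ) : HasDerivAt (fun t => Real.exp (-t)) (-Real.exp (-t)) t := by
    simpa only [mul_neg_one] using (hasDerivAt_neg t).exp
  have hq : Continuous fun t => quantile b (Real.exp (-t)) - quantile b a :=
    ((continuous_quantile hb).comp (by fun_prop)).sub continuous_const
  have hprim : Continuous fun t =>
      t * (quantile b (Real.exp (-t)) - quantile b a) + (denominator b (Real.exp (-t)))⁻¹ :=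
    (continuous_id.mul hq).add ((continuous_inv_denominator hb).comp (by fun_prop))
  have hderiv (t : ℝ) (ht : t ∈ Ioo 0 (-Real.log a)) : HasDerivAt
      (fun t => t * (quantile b (Real.exp (-t)) - quantile b a)
        + (denominator b (Real.exp (-t)))⁻¹)
      (quantile b (Real.exp (-t)) - quantile b a) t := by
    have hD0 := (denominator_pos hb (Real.exp (-t))).ne'
    have hlt : Real.exp (-t) < 1 := Real.exp_lt_one_iff.2 (neg_neg_of_pos ht.1)
    have hquantile : HasDerivAt (fun t => quantile b (Real.exp (-t))) _ t :=
      HasDerivAt.comp (h₂ := quantile b) t (hasDerivAt_quantile hb _) (hexp t)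
    have hdenominator : HasDerivAt (fun t => denominator b (Real.exp (-t))) _ t :=
      HasDerivAt.comp (h₂ := denominator b) t
        (hasDerivAt_denominator ⟨Real.exp_pos _, hlt⟩) (hexp t)
    refine (((hasDerivAt_id t).mul (hquantile.sub_const (quantile b a))).add
      (hdenominator.fun_inv hD0)).congr_deriv ?_
    rw [Real.log_exp]
    simp only [id]
    field_simp
    ring
  rw [intervalIntegral.integral_eq_sub_of_hasDerivAt_of_le
    (neg_nonneg.2 (Real.log_nonpos ha.1.le ha.2)) hprim.continuousOn hderiv
    (hq.intervalIntegrable _ _), neg_neg, Real.exp_log ha.1, neg_zero, Real.exp_zero,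
    denominator_one]
  ring

lemma hasDerivAt_clock (hb : 0 < b) (s : ℝ) : HasDerivAt (clock b) (denominator b s)⁻¹ s :=
  ((continuous_inv_denominator hb).integral_hasStrictDerivAt 0 s).hasDerivAt

/-- The clock as an order automorphism of `ℝ`. -/
noncomputable def clockIso (hb : 0 < b) : ℝ ≃o ℝ :=
  StrictMono.orderIsoOfSurjective (clock b)
    (strictMono_of_hasDerivAt_pos (hasDerivAt_clock hb) fun s => inv_pos.2 (denominator_pos hb s))
    (surjective_of_le_deriv (inv_pos.2 (add_pos hb zero_lt_one)) (hasDerivAt_clock hb) fun s =>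
      inv_anti₀ (denominator_pos hb s) (denominator_le s))

/-- The value of the limiting instance when only agent utilities up to `y` can still arrive. -/
noncomputable def value (hb : 0 < b) (y : ℝ) : ℝ := quantile b ((clockIso hb).symm y)

lemma clockIso_symm_zero (hb : 0 < b) : (clockIso hb).symm 0 = 0 :=
  (clockIso hb).symm_apply_eq.2 intervalIntegral.integral_same.symm

lemma clockIso_symm_one (hb : 0 < b) (hclock : clock b 1 = 1) : (clockIso hb).symm 1 = 1 :=
  (clockIso hb).symm_apply_eq.2 hclock.symm

lemma clockIso_symm_mem_Ioc (hb : 0 < b) (hclock : clock b 1 = 1) {y : ℝ}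
    (hy : y ∈ Ioc (0 : ℝ) 1) : (clockIso hb).symm y ∈ Ioc (0 : ℝ) 1 :=
  ⟨(clockIso_symm_zero hb).symm.trans_lt ((clockIso hb).symm.strictMono hy.1),
    ((clockIso hb).symm.monotone hy.2).trans_eq (clockIso_symm_one hb hclock)⟩

lemma value_zero (hb : 0 < b) : value hb 0 = 0 := by
  rw [value, clockIso_symm_zero, quantile_zero]

lemma value_one (hb : 0 < b) (hclock : clock b 1 = 1) : value hb 1 = quantile b 1 := by
  rw [value, clockIso_symm_one hb hclock]

lemma hasDerivAt_value (hb : 0 < b) (y : ℝ) :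
    HasDerivAt (value hb) (denominator b ((clockIso hb).symm y))⁻¹ y := by
  have hD := (denominator_pos hb ((clockIso hb).symm y)).ne'
  have hsymm := hasDerivAt_orderIso_symm (clockIso hb) (hasDerivAt_clock hb _) (inv_ne_zero hD)
  refine ((hasDerivAt_quantile hb _).comp y hsymm).congr_deriv ?_
  field_simp

lemma contDiff_value (hb : 0 < b) : ContDiff ℝ 1 (value hb) := by
  refine contDiff_one_iff_deriv.2 ⟨fun y => (hasDerivAt_value hb y).differentiableAt, ?_⟩
  rw [funext fun y => (hasDerivAt_value hb y).deriv]
  exact (continuous_inv_denominator hb).comp (clockIso hb).symm.continuous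

end Profile

section HardInstance

variable {b κ L : ℝ} {m : ℕ}

/-- The largest principal utility of the hard instance, which carries mass `κ`; its distance to the
other values is chosen so that it adds about `(b + 1)⁻¹` to the expected maximum. -/
noncomputable def peak (b κ : ℝ) : ℝ := quantile b 1 + ((b + 1) * κ)⁻¹

/-- The intensity of principal utilities of the hard instance: `quantile b (exp (-t))` for
`t ∈ [0, L]`, and the value `peak b κ` with mass `κ`. -/
noncomputable def intensity (b κ L : ℝ) : Measure ℝ :=
  (volume.restrict (Icc 0 L)).map (fun t => quantile b (Real.exp (-t)))
    + ENNReal.ofReal κ • Measure.dirac (peak b κ)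

/-- The law of the principal utility for which `m` independent samples have intensity
`intensity b κ (m - κ)`. -/
noncomputable def hardLaw (b κ : ℝ) (m : ℕ) : Measure ℝ :=
  (m : ℝ≥0)⁻¹ • intensity b κ (m - κ)

lemma quantile_one_le_peak (hb : 0 < b) (hκ : 0 ≤ κ) : quantile b 1 ≤ peak b κ :=
  le_add_of_nonneg_right (by positivity)

lemma continuous_quantile_exp_neg (hb : 0 < b) : Continuous fun t => quantile b (Real.exp (-t)) :=
  (continuous_quantile hb).comp (by fun_prop)

instance : IsFiniteMeasure (intensity b κ L) := by
  have := (Measure.dirac (peak b κ)).smul_finite (c := ENNReal.ofReal κ) ENNReal.ofReal_ne_top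
  unfold intensity
  infer_instance

lemma intensity_univ (hb : 0 < b) (hκ : 0 ≤ κ) (hL : 0 ≤ L) :
    intensity b κ L univ = ENNReal.ofReal (L + κ) := by
  rw [intensity, Measure.add_apply,
    Measure.map_apply (continuous_quantile_exp_neg hb).measurable .univ, preimage_univ,
    Measure.restrict_apply_univ, Real.volume_Icc, Measure.smul_apply, measure_univ, smul_eq_mul,
    mul_one, sub_zero, ENNReal.ofReal_add hL hκ]

lemma ae_intensity_mem_Icc (hb : 0 < b) (hκ : 0 ≤ κ) :
    ∀ᵐ x ∂(intensity b κ L), x ∈ Icc 0 (peak b κ) := by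
  have hpeak := quantile_one_le_peak hb hκ
  refine ae_add_measure_iff.2 ⟨?_, Measure.ae_smul_measure ?_ _⟩
  · refine (ae_map_iff (continuous_quantile_exp_neg hb).aemeasurable measurableSet_Icc).2 ?_
    filter_upwards [ae_restrict_mem measurableSet_Icc] with t ht
    exact Icc_subset_Icc_right hpeak <| quantile_mem_Icc hb
      ⟨(Real.exp_pos _).le, Real.exp_le_one_iff.2 (neg_nonpos.2 ht.1)⟩
  · exact (ae_dirac_iff measurableSet_Icc).2 ⟨(quantile_one_pos hb).le.trans hpeak, le_rfl⟩

lemma integrable_id_intensity (hb : 0 < b) (hκ : 0 ≤ κ) : Integrable id (intensity b κ L) :=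
  .of_mem_Icc 0 (peak b κ) aemeasurable_id (ae_intensity_mem_Icc hb hκ)

lemma integral_intensity (hb : 0 < b) (hκ : 0 ≤ κ) {g : ℝ → ℝ}
    (hg : Integrable g (intensity b κ L)) :
    ∫ x, g x ∂(intensity b κ L)
      = (∫ t in Icc 0 L, g (quantile b (Real.exp (-t)))) + κ * g (peak b κ) := by
  obtain ⟨hmap, hdirac⟩ := integrable_add_measure.1 hg
  rw [intensity, integral_add_measure hmap hdirac,
    integral_map (continuous_quantile_exp_neg hb).aemeasurable hmap.aestronglyMeasurable,
    integral_smul_measure, integral_dirac, ENNReal.toReal_ofReal hκ, smul_eq_mul]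

lemma setIntegral_posPart_quantile_exp_neg_sub_le (hb : 0 < b) {a : ℝ} (ha : a ∈ Ioc (0 : ℝ) 1) :
    ∫ t in Icc 0 L, max (quantile b (Real.exp (-t)) - quantile b a) 0
      ≤ (denominator b a)⁻¹ - (b + 1)⁻¹ := by
  set f : ℝ → ℝ := fun t => quantile b (Real.exp (-t)) - quantile b a
  have hf : Continuous f := (continuous_quantile_exp_neg hb).sub continuous_const
  have hf_nonneg {t : ℝ} : 0 ≤ f t ↔ t ≤ -Real.log a := by
    rw [sub_nonneg, (strictMono_quantile hb).le_iff_le, ← Real.log_le_iff_le_exp ha.1, le_neg]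
  rw [← integral_quantile_exp_neg_sub hb ha, intervalIntegral.integral_of_le
    (neg_nonneg.2 (Real.log_nonpos ha.1.le ha.2)), ← integral_Icc_eq_integral_Ioc]
  calc ∫ t in Icc 0 L, max (f t) 0
      = ∫ t in Icc 0 L ∩ Iic (-Real.log a), max (f t) 0 :=
        setIntegral_eq_of_subset_of_forall_sdiff_eq_zero measurableSet_Icc inter_subset_left
          fun t ht => max_eq_right (not_le.1 fun h => ht.2 ⟨ht.1, hf_nonneg.1 h⟩).le
    _ ≤ ∫ t in Icc 0 (-Real.log a), max (f t) 0 :=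
        setIntegral_mono_set (hf.max continuous_const).integrableOn_Icc
          (.of_forall fun t => le_max_right _ _)
          (LE.le.eventuallyLE fun t ht => ⟨ht.1.1, ht.2⟩)
    _ = ∫ t in Icc 0 (-Real.log a), f t :=
        setIntegral_congr_fun measurableSet_Icc fun t ht => max_eq_left (hf_nonneg.2 ht.2)

lemma integral_posPart_intensity_le (hb : 0 < b) (hκ : 0 < κ) {a : ℝ} (ha : a ∈ Ioc (0 : ℝ) 1) :
    ∫ x, max (x - quantile b a) 0 ∂(intensity b κ L)
      ≤ (denominator b a)⁻¹ + κ * (quantile b 1 - quantile b a) := by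
  have hpeak : 0 ≤ peak b κ - quantile b a :=
    sub_nonneg.2 (((strictMono_quantile hb).monotone ha.2).trans (quantile_one_le_peak hb hκ.le))
  have hint : Integrable (fun x => max (x - quantile b a) 0) (intensity b κ L) :=
    ((integrable_id_intensity hb hκ.le).sub (integrable_const _)).pos_part
  rw [integral_intensity hb hκ.le hint, max_eq_left hpeak]
  have hbulk := setIntegral_posPart_quantile_exp_neg_sub_le (L := L) hb ha
  have hatom : κ * (peak b κ - quantile b a)
      = κ * (quantile b 1 - quantile b a) + (b + 1)⁻¹ := by
    rw [peak]
    field_simp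
    ring
  linarith

lemma antitone_intensity_Ici : Antitone fun x => (intensity b κ L).real (Ici x) := fun _ _ hxy =>
  measureReal_mono (Ici_subset_Ici.2 hxy)

lemma min_neg_log_le_intensity_Ici (hb : 0 < b) {u : ℝ} (hu : 0 < u) :
    min L (-Real.log u) ≤ (intensity b κ L).real (Ici (quantile b u)) := by
  have hmeas := (continuous_quantile_exp_neg hb).measurable
  calc min L (-Real.log u) ≤ volume.real (Icc 0 (min L (-Real.log u))) := by
        rw [Real.volume_real_Icc, sub_zero]
        exact le_max_left _ _
    _ ≤ (volume.restrict (Icc 0 L)).real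
          ((fun t => quantile b (Real.exp (-t))) ⁻¹' Ici (quantile b u)) := by
        rw [measureReal_restrict_apply (hmeas measurableSet_Ici)]
        refine measureReal_mono (fun t ht => ⟨?_, ht.1, ht.2.trans (min_le_left _ _)⟩)
          (measure_ne_top_of_subset inter_subset_right measure_Icc_lt_top.ne)
        exact (strictMono_quantile hb).monotone <|
          (Real.log_le_iff_le_exp hu).1 (le_neg.1 (ht.2.trans (min_le_right _ _)))
    _ = ((volume.restrict (Icc 0 L)).map fun t => quantile b (Real.exp (-t))).real
          (Ici (quantile b u)) := (map_measureReal_apply hmeas measurableSet_Ici).symm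
    _ ≤ (intensity b κ L).real (Ici (quantile b u)) :=
        ENNReal.toReal_mono (measure_ne_top _ _) (Measure.le_add_right le_rfl _)

lemma le_intensity_Ici {x : ℝ} (hx : x ≤ peak b κ) : κ ≤ (intensity b κ L).real (Ici x) := by
  refine (ENNReal.ofReal_le_iff_le_toReal (measure_ne_top _ _)).1 ?_
  calc ENNReal.ofReal κ = (ENNReal.ofReal κ • Measure.dirac (peak b κ)) (Ici x) := by
        rw [Measure.smul_apply, Measure.dirac_apply_of_mem (mem_Ici.2 hx), smul_eq_mul, mul_one]
    _ ≤ _ := Measure.le_add_left le_rfl _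

lemma intervalIntegrable_one_sub_exp_neg_intensity_Ici (x y : ℝ) :
    IntervalIntegrable (fun x => 1 - Real.exp (-(intensity b κ L).real (Ici x))) volume x y :=
  Antitone.intervalIntegrable fun _ _ hxy =>
    sub_le_sub_left (Real.exp_le_exp.2 (neg_le_neg (antitone_intensity_Ici hxy))) 1

lemma one_sub_sub_exp_neg_le (hb : 0 < b) {u : ℝ} (hu : 0 < u) :
    1 - u - Real.exp (-L) ≤ 1 - Real.exp (-(intensity b κ L).real (Ici (quantile b u))) := by
  have hmin : Real.exp (-min L (-Real.log u)) ≤ u + Real.exp (-L) := by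
    rcases min_choice L (-Real.log u) with h | h <;> rw [h]
    · exact le_add_of_nonneg_left hu.le
    · rw [neg_neg, Real.exp_log hu]
      exact le_add_of_nonneg_right (Real.exp_pos _).le
  have htail := Real.exp_le_exp.2
    (neg_le_neg (min_neg_log_le_intensity_Ici (κ := κ) (L := L) hb hu))
  linarith

lemma le_integral_below_quantile_one (hb : 0 < b) :
    (1 + b - Real.exp (-L)) * quantile b 1 - (b + 1)⁻¹
      ≤ ∫ x in (0 : ℝ)..(quantile b 1), (1 - Real.exp (-(intensity b κ L).real (Ici x))) := by
  set h : ℝ → ℝ := fun x => 1 - Real.exp (-(intensity b κ L).real (Ici x))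
  set q' : ℝ → ℝ := fun u => (denominator b u)⁻¹ ^ 2
  have hq' : Continuous q' := (continuous_inv_denominator hb).pow 2
  have hq'_nonneg (u : ℝ) : 0 ≤ q' u := sq_nonneg _
  have hquantile : ContinuousOn (quantile b) (uIcc 0 1) := (continuous_quantile hb).continuousOn
  have hderiv (u : ℝ) (_ : u ∈ Ioo (min 0 1) (max 0 1)) : HasDerivAt (quantile b) (q' u) u :=
    hasDerivAt_quantile hb u
  calc (1 + b - Real.exp (-L)) * quantile b 1 - (b + 1)⁻¹
      = ∫ u in (0 : ℝ)..1, ((1 + b - Real.exp (-L)) * q' u - (b + u) * q' u) := by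
        rw [intervalIntegral.integral_sub (Continuous.intervalIntegrable (by fun_prop) _ _)
          (Continuous.intervalIntegrable (by fun_prop) _ _),
          intervalIntegral.integral_const_mul, integral_add_mul_deriv_quantile hb, quantile]
    _ ≤ ∫ u in (0 : ℝ)..1, h (quantile b u) * q' u := by
        refine intervalIntegral.integral_mono_on_of_le_Ioo zero_le_one
          (Continuous.intervalIntegrable (by fun_prop) _ _) ?_ fun u hu => ?_
        · refine (intervalIntegral.integrable_comp_mul_deriv_iff_of_deriv_nonneg (g := h)
            hquantile hderiv fun u _ => hq'_nonneg u).2 ?_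
          exact intervalIntegrable_one_sub_exp_neg_intensity_Ici _ _
        · rw [← sub_mul]
          refine mul_le_mul_of_nonneg_right ?_ (hq'_nonneg u)
          linarith [one_sub_sub_exp_neg_le (κ := κ) (L := L) hb hu.1]
    _ = ∫ x in (0 : ℝ)..(quantile b 1), h x := by
        have hsubst := intervalIntegral.integral_comp_mul_deriv_of_deriv_nonneg (g := h)
          hquantile hderiv fun u _ => hq'_nonneg u
        rwa [quantile_zero] at hsubst

lemma le_integral_above_quantile_one (hb : 0 < b) (hκ : κ ∈ Ioc (0 : ℝ) 1) :
    (b + 1)⁻¹ - κ / (b + 1)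
      ≤ ∫ x in (quantile b 1)..(peak b κ), (1 - Real.exp (-(intensity b κ L).real (Ici x))) := by
  have hexp : κ - κ ^ 2 ≤ 1 - Real.exp (-κ) := by
    have hκ_abs : |-κ| ≤ 1 := by
      rw [abs_neg, abs_of_pos hκ.1]
      exact hκ.2
    linarith [le_of_abs_le (Real.abs_exp_sub_one_sub_id_le hκ_abs), neg_sq κ]
  calc (b + 1)⁻¹ - κ / (b + 1) = (κ - κ ^ 2) * (peak b κ - quantile b 1) := by
        have := hκ.1
        rw [peak]
        field_simp
        ring
    _ ≤ (1 - Real.exp (-κ)) * (peak b κ - quantile b 1) :=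
        mul_le_mul_of_nonneg_right hexp (sub_nonneg.2 (quantile_one_le_peak hb hκ.1.le))
    _ = ∫ _ in (quantile b 1)..(peak b κ), (1 - Real.exp (-κ)) := by
        rw [intervalIntegral.integral_const, smul_eq_mul, mul_comm]
    _ ≤ _ := intervalIntegral.integral_mono_on (quantile_one_le_peak hb hκ.1.le)
        intervalIntegrable_const (intervalIntegrable_one_sub_exp_neg_intensity_Ici _ _)
        fun x hx => sub_le_sub_left (Real.exp_le_exp.2 (neg_le_neg (le_intensity_Ici hx.2))) 1

theorem le_integral_one_sub_exp_neg_intensity_Ici (hb : 0 < b) (hκ : κ ∈ Ioc (0 : ℝ) 1) :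
    (1 + b - Real.exp (-L)) * quantile b 1 - κ / (b + 1)
      ≤ ∫ x in Ioc 0 (peak b κ), (1 - Real.exp (-(intensity b κ L).real (Ici x))) := by
  have hbelow := le_integral_below_quantile_one (κ := κ) (L := L) hb
  have habove := le_integral_above_quantile_one (L := L) hb hκ
  rw [← intervalIntegral.integral_of_le
      ((quantile_one_pos hb).le.trans (quantile_one_le_peak hb hκ.1.le)),
    ← intervalIntegral.integral_add_adjacent_intervals
      (intervalIntegrable_one_sub_exp_neg_intensity_Ici 0 (quantile b 1))
      (intervalIntegrable_one_sub_exp_neg_intensity_Ici (quantile b 1) (peak b κ))]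
  linarith

lemma isProbabilityMeasure_hardLaw (hb : 0 < b) (hκ : 0 ≤ κ) (hm : 0 < m) (hκm : κ ≤ m) :
    IsProbabilityMeasure (hardLaw b κ m) := by
  refine ⟨?_⟩
  rw [hardLaw, Measure.smul_apply, intensity_univ hb hκ (sub_nonneg.2 hκm), sub_add_cancel,
    ENNReal.ofReal_natCast, ENNReal.smul_def, smul_eq_mul, ENNReal.coe_inv (by positivity),
    ENNReal.coe_natCast]
  exact ENNReal.inv_mul_cancel (Nat.cast_ne_zero.2 hm.ne') (ENNReal.natCast_ne_top m)

lemma smul_hardLaw (hm : 0 < m) : (m : ℝ≥0) • hardLaw b κ m = intensity b κ (m - κ) :=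
  smul_inv_smul₀ (Nat.cast_ne_zero.2 hm.ne') _

lemma mul_integral_hardLaw (hm : 0 < m) (g : ℝ → ℝ) :
    m * ∫ x, g x ∂(hardLaw b κ m) = ∫ x, g x ∂(intensity b κ (m - κ)) := by
  rw [← smul_hardLaw hm, integral_smul_nnreal_measure, NNReal.smul_def, NNReal.coe_natCast,
    smul_eq_mul]

lemma mul_hardLaw_real (hm : 0 < m) (s : Set ℝ) :
    m * (hardLaw b κ m).real s = (intensity b κ (m - κ)).real s := by
  rw [← smul_hardLaw hm, measureReal_nnreal_smul_apply, NNReal.coe_natCast]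

lemma ae_hardLaw_mem_Icc (hb : 0 < b) (hκ : 0 ≤ κ) :
    ∀ᵐ x ∂(hardLaw b κ m), x ∈ Icc 0 (peak b κ) :=
  Measure.ae_smul_measure (ae_intensity_mem_Icc hb hκ) _

/-- An upper solution of the Bellman inequality for the hard instance: the added slope
`κ * quantile b 1` pays for the atom at the peak. -/
noncomputable def valueBound (hb : 0 < b) (κ y : ℝ) : ℝ := value hb y + κ * quantile b 1 * y

lemma hasDerivAt_valueBound (hb : 0 < b) (y : ℝ) : HasDerivAt (valueBound hb κ)
    ((denominator b ((clockIso hb).symm y))⁻¹ + κ * quantile b 1) y := by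
  simpa only [mul_one] using!
    (hasDerivAt_value hb y).add ((hasDerivAt_id y).const_mul (κ * quantile b 1))

lemma contDiff_valueBound (hb : 0 < b) : ContDiff ℝ 1 (valueBound hb κ) :=
  (contDiff_value hb).add (contDiff_const.mul contDiff_id)

lemma value_le_valueBound (hb : 0 < b) (hκ : 0 ≤ κ) {y : ℝ} (hy : 0 ≤ y) :
    value hb y ≤ valueBound hb κ y :=
  le_add_of_nonneg_right (mul_nonneg (mul_nonneg hκ (quantile_one_pos hb).le) hy)

lemma valueBound_one (hb : 0 < b) (hclock : clock b 1 = 1) :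
    valueBound hb κ 1 = (1 + κ) * quantile b 1 := by
  rw [valueBound, value_one hb hclock]
  ring

lemma integral_posPart_sub_valueBound_le (hb : 0 < b) (hclock : clock b 1 = 1) (hκ : 0 < κ)
    {y : ℝ} (hy : y ∈ Ioc (0 : ℝ) 1) :
    ∫ x, max (x - valueBound hb κ y) 0 ∂(intensity b κ L) ≤ deriv (valueBound hb κ) y := by
  have ha := clockIso_symm_mem_Ioc hb hclock hy
  have hvalue : 0 ≤ value hb y := (quantile_mem_Icc hb (Ioc_subset_Icc_self ha)).1
  have hid := integrable_id_intensity (L := L) hb hκ.le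
  calc ∫ x, max (x - valueBound hb κ y) 0 ∂(intensity b κ L)
      ≤ ∫ x, max (x - value hb y) 0 ∂(intensity b κ L) :=
        integral_mono (hid.sub (integrable_const _)).pos_part
          (hid.sub (integrable_const _)).pos_part fun x =>
            max_le_max_right 0 (sub_le_sub_left (value_le_valueBound hb hκ.le hy.1.le) x)
    _ ≤ (denominator b ((clockIso hb).symm y))⁻¹ + κ * (quantile b 1 - value hb y) :=
        integral_posPart_intensity_le hb hκ ha
    _ ≤ (denominator b ((clockIso hb).symm y))⁻¹ + κ * quantile b 1 := by
        gcongr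
        exact sub_le_self _ hvalue
    _ = deriv (valueBound hb κ) y := (hasDerivAt_valueBound hb y).deriv.symm

theorem integral_proposalUtility_hardLaw_le (hb : 0 < b) (hclock : clock b 1 = 1) (hκ : 0 < κ)
    (hm : 0 < m) (hκm : κ ≤ m) {R : Set (ℝ × ℝ)} (hR : MeasurableSet R)
    {sel : (Fin (m + 1) → ℝ × ℝ) → Option (Fin (m + 1))} (hsel : ProposesMaximalEligible R sel) :
    ∫ v, proposalUtility sel v ∂(Measure.pi fun _ => sampleLaw (hardLaw b κ m))
      ≤ (1 + 1 / m) * ((1 + κ) * quantile b 1) := by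
  have := isProbabilityMeasure_hardLaw hb hκ.le hm hκm
  have hmem := ae_hardLaw_mem_Icc (m := m) hb hκ.le
  rw [← valueBound_one hb hclock]
  refine integral_proposalUtility_le_of_bellman hm (.of_mem_Icc 0 (peak b κ) aemeasurable_id hmem)
    (hmem.mono fun _ => And.left) (contDiff_valueBound hb) ?_ (fun y hy => ?_) hR hsel
  · exact (value_zero hb).symm.trans_le (value_le_valueBound hb hκ.le le_rfl)
  · rw [mul_integral_hardLaw hm]
    exact integral_posPart_sub_valueBound_le hb hclock hκ hy

theorem le_integral_iSup_hardLaw (hb : 0 < b) (hκ : κ ∈ Ioc (0 : ℝ) 1) (hm : 0 < m)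
    (hκm : κ ≤ m) :
    (1 + b - Real.exp (-(m - κ))) * quantile b 1 - κ / (b + 1)
      ≤ ∫ v, ⨆ i, (v i).1 ∂(Measure.pi fun _ : Fin (m + 1) => sampleLaw (hardLaw b κ m)) := by
  have := isProbabilityMeasure_hardLaw hb hκ.1.le hm hκm
  refine (le_integral_one_sub_exp_neg_intensity_Ici hb hκ).trans ?_
  simpa only [mul_hardLaw_real hm] using
    integral_Ioc_one_sub_exp_neg_le_integral_iSup (m := m)
      (ae_hardLaw_mem_Icc (m := m) hb hκ.1.le)

end HardInstance

section Limit

variable {α ε V : ℝ}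

lemma exists_atomMass_mul_lt (hα : 0 < α) (hε : 0 < ε) (hV : 0 < V) (c : ℝ) :
    ∃ κ ∈ Ioc (0 : ℝ) 1, (1 + κ) * V < (α + ε) * (1 / α * V - κ * c) := by
  have hzero : (1 + 0) * V < (α + ε) * (1 / α * V - 0 * c) := by
    have : (α + ε) * (1 / α * V - 0 * c) = (1 + 0) * V + ε / α * V := by
      field_simp
      ring
    have : 0 < ε / α * V := by positivity
    linarith
  have hlim : ∀ᶠ κ in 𝓝 (0 : ℝ), (1 + κ) * V < (α + ε) * (1 / α * V - κ * c) :=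
    ContinuousAt.eventually_lt (by fun_prop) (by fun_prop) hzero
  obtain ⟨κ, hκlt, hκ⟩ := ((hlim.filter_mono nhdsWithin_le_nhds).and
    (Ioc_mem_nhdsGT (zero_lt_one (α := ℝ)))).exists
  exact ⟨κ, hκ, hκlt⟩

lemma eventually_sampleSize_mul_lt {κ A B c : ℝ} (h : A < c * B) :
    ∀ᶠ m : ℕ in atTop, (1 + 1 / (m : ℝ)) * A < c * (B - Real.exp (-(m - κ)) * V) := by
  have hinv : Tendsto (fun m : ℕ => (1 + 1 / (m : ℝ)) * A) atTop (𝓝 ((1 + 0) * A)) :=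
    (tendsto_one_div_atTop_nhds_zero_nat.const_add 1).mul_const A
  have hexp : Tendsto (fun m : ℕ => Real.exp (-(m - κ))) atTop (𝓝 0) :=
    Real.tendsto_exp_neg_atTop_nhds_zero.comp
      (tendsto_atTop_add_const_right _ (-κ) tendsto_natCast_atTop_atTop)
  have hbound : Tendsto (fun m : ℕ => c * (B - Real.exp (-(m - κ)) * V)) atTop
      (𝓝 (c * (B - 0 * V))) := ((hexp.mul_const V).const_sub B).const_mul c
  rw [add_zero, one_mul] at hinv
  rw [zero_mul, sub_zero] at hbound
  exact hinv.eventually_lt hbound h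

end Limit

lemma clock_one_of_integral_eq_one {α : ℝ}
    (hα : ∫ u in (0 : ℝ)..1, (u - u * Real.log u + 1 / α - 1)⁻¹ = 1) :
    clock (1 / α - 1) 1 = 1 := by
  refine (intervalIntegral.integral_congr fun u hu => ?_).trans hα
  rw [uIcc_of_le zero_le_one] at hu
  simp only [denominator_of_mem hu, Real.negMulLog]
  ring_nf

end Delegation

open Delegation in
theorem delegation_alpha_tight_general (α : ℝ) (hα : α ∈ Set.Ioo (0 : ℝ) 1)
    (hαdef : ∫ u in (0 : ℝ)..1, (u - u * Real.log u + 1 / α - 1)⁻¹ = 1) {ε : ℝ} (hε : 0 < ε) :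
    ∀ᶠ n : ℕ in Filter.atTop, ∃ F : Measure ℝ, IsProbabilityMeasure F ∧ F {v | v < 0} = 0 ∧
      ∀ R : Set (ℝ × ℝ), MeasurableSet R → ∀ sel : (Fin n → ℝ × ℝ) → Option (Fin n),
        ProposesMaximalEligible R sel →
        AEStronglyMeasurable (proposalUtility sel) (Measure.pi fun _ : Fin n => sampleLaw F) →
        ∫ v, proposalUtility sel v ∂(Measure.pi fun _ : Fin n => sampleLaw F)
          < (α + ε) * ∫ v, (⨆ i, (v i).1) ∂(Measure.pi fun _ : Fin n => sampleLaw F) := by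
  set b := 1 / α - 1
  have hb : 0 < b := sub_pos.2 (one_lt_one_div hα.1 hα.2)
  have hclock : clock b 1 = 1 := clock_one_of_integral_eq_one hαdef
  obtain ⟨κ, hκ, hκlt⟩ :=
    exists_atomMass_mul_lt hα.1 hε (quantile_one_pos hb) (b + 1)⁻¹
  rw [← Filter.map_add_atTop_eq_nat 1, Filter.eventually_map]
  filter_upwards [eventually_sampleSize_mul_lt (V := quantile b 1) (κ := κ) hκlt,
    Filter.eventually_gt_atTop 0] with m hlt hm
  have hκm : κ ≤ m := hκ.2.trans (Nat.one_le_cast.2 hm)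
  refine ⟨hardLaw b κ m, isProbabilityMeasure_hardLaw hb hκ.1.le hm hκm, ?_, ?_⟩
  · exact measure_eq_zero_iff_ae_notMem.2
      ((ae_hardLaw_mem_Icc hb hκ.1.le).mono fun _ hv => hv.1.not_gt)
  · intro R hR sel hsel _
    refine (integral_proposalUtility_hardLaw_le hb hclock hκ.1 hm hκm hR hsel).trans_lt <|
      hlt.trans_le <| mul_le_mul_of_nonneg_left ?_ (add_pos hα.1 hε).le
    refine (le_of_eq ?_).trans (le_integral_iSup_hardLaw hb hκ hm hκm)
    ring

/-- tightness of the factor `α ≈ 0.745`.  Let `α ∈ (0,1)` solve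
`∫_0^1 dy/(y − y·ln y + 1/α − 1) = 1`.  For every `ε > 0` there exist an integer
`n` and a product distribution of `(x,y)` on `[0,∞)×[0,1]` — `x ∼ F` and `y`
uniform on `[0,1]`, independent of `x` — such that for every measurable eligible
set `R`, when the agent draws `n` i.i.d. samples and proposes the eligible sample
with maximum `y`-value (proposing nothing if no sample is eligible), the
principal's expected utility — the `x`-value of the accepted proposal, or `0` if
none — is less than `(α + ε)·E[max_i x_i]`. -/
theorem delegation_alpha_tight (α : ℝ) (hα : α ∈ Set.Ioo (0:ℝ) 1)
    (hαdef : ∫ u in (0:ℝ)..1, (u - u * Real.log u + 1 / α - 1)⁻¹ = 1) :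
    ∀ ε : ℝ, 0 < ε →
    ∃ (n : ℕ) (F : Measure ℝ), 0 < n ∧ IsProbabilityMeasure F ∧
      F {v | v < 0} = 0 ∧
      ∀ R : Set (ℝ × ℝ), MeasurableSet R →
      ∀ sel : (Fin n → ℝ × ℝ) → Option (Fin n),
        (∀ v i, sel v = some i → v i ∈ R ∧ ∀ j, v j ∈ R → (v j).2 ≤ (v i).2) →
        (∀ v, (∃ i, v i ∈ R) → (sel v).isSome) →
        AEStronglyMeasurable (fun v => ((sel v).map fun i => (v i).1).getD 0)
          (Measure.pi fun _ : Fin n =>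
            F.prod ((volume : Measure ℝ).restrict (Set.Icc (0:ℝ) 1))) →
        ∫ v, ((sel v).map fun i => (v i).1).getD 0
            ∂(Measure.pi fun _ : Fin n =>
                F.prod ((volume : Measure ℝ).restrict (Set.Icc (0:ℝ) 1)))
          < (α + ε) *
              ∫ v, (⨆ i, (v i).1)
                ∂(Measure.pi fun _ : Fin n =>
                    F.prod ((volume : Measure ℝ).restrict (Set.Icc (0:ℝ) 1))) := by
  intro ε hε
  obtain ⟨n, ⟨F, hF, hF0, hlt⟩, hn⟩ := ((delegation_alpha_tight_general α hα hαdef hε).and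
    (Filter.eventually_gt_atTop 0)).exists
  exact ⟨n, F, hn, hF, hF0, fun R hR sel hsel _ hmeas => hlt R hR sel hsel hmeas⟩
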